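/- Let F be a formal group law over a commutative ring R. For all f, g ∈ R((z)) and all n ≥ 1: (i) Res^F_{z=0} (𝒮^F_n f)(z) dz = 0; (ii) Res^F_{z=0} (𝒮^F_n f)(z)·g(z) dz = −Σ_{j=1}^{n} Res^F_{z=0} (𝒮^F_{n−j} f)(z)·(𝒮^F_j g)(z) dz. -/

import Mathlib

/-!
Coefficient-wise formal calculus for vertex `F`-algebras, following
M. Upmeier, "Vertex F-Algebras and Their Associated Lie Algebra".

Series in one, two or three variables are represented by their coefficient
functions `ℤ → R`, `ℤ → ℤ → R`, …; products are given by coefficient-wise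
(finite) sums, expressed via `finsum` (`∑ᶠ`).
-/

open scoped BigOperators

noncomputable section

/-- Generalized binomial coefficient `C(n,k) = n(n-1)⋯(n-k+1)/k!` for `n : ℤ`, `k : ℕ`. -/
def zbinom (n : ℤ) (k : ℕ) : ℤ :=
  if 0 ≤ n then (n.toNat.choose k : ℤ)
  else (-1 : ℤ) ^ k * (((k : ℤ) - n - 1).toNat.choose k : ℤ)

/-- `C(n,m)` for integer `m`, with `C(n,m) = 0` for `m < 0`. -/
def zbinomZ (n m : ℤ) : ℤ := if m < 0 then 0 else zbinom n m.toNat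

/-- `(-1)^n` for `n : ℤ`. -/
def msign (n : ℤ) : ℤ := if Even n then 1 else -1

section Series

variable {R : Type*} [CommRing R] {M : Type*} [AddCommGroup M] [Module R M]

/-- Product of a one-variable series with `R`-coefficients with an `M`-valued one. -/
def mulS (f : ℤ → R) (g : ℤ → M) : ℤ → M := fun n => ∑ᶠ i : ℤ, f i • g (n - i)

/-- The constant series `1` (one variable). -/
def oneS (R : Type*) [CommRing R] : ℤ → R := fun n => if n = 0 then 1 else 0

/-- Natural powers of a one-variable series. -/
def pow1 (f : ℤ → R) : ℕ → ℤ → R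
  | 0 => oneS R
  | k + 1 => mulS f (pow1 f k)

/-- Product of two-variable series. -/
def mulS2 (f : ℤ → ℤ → R) (g : ℤ → ℤ → M) : ℤ → ℤ → M :=
  fun a b => ∑ᶠ p : ℤ × ℤ, f p.1 p.2 • g (a - p.1) (b - p.2)

/-- The constant series `1` (two variables). -/
def oneS2 (R : Type*) [CommRing R] : ℤ → ℤ → R := fun a b => if a = 0 ∧ b = 0 then 1 else 0

/-- Natural powers of a two-variable series. -/
def pow2 (f : ℤ → ℤ → R) : ℕ → ℤ → ℤ → R
  | 0 => oneS2 R
  | k + 1 => mulS2 f (pow2 f k)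

/-- `f ∈ M((z))`: only finitely many negative powers. -/
def IsLaurent (f : ℤ → M) : Prop := ∃ N : ℤ, ∀ n : ℤ, n < N → f n = 0

/-- `f ∈ M((z,w))`: only finitely many nonzero coefficients with some negative index. -/
def IsLaurent2 (f : ℤ → ℤ → M) : Prop :=
  {p : ℤ × ℤ | (p.1 < 0 ∨ p.2 < 0) ∧ f p.1 p.2 ≠ 0}.Finite

/-- Formal derivative of a one-variable series. -/
def fderiv1 (f : ℤ → R) : ℤ → R := fun n => ((n + 1 : ℤ) : R) * f (n + 1)

/-- The polynomial `z - w` as a two-variable series. -/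
def zmw (R : Type*) [CommRing R] : ℤ → ℤ → R :=
  fun i j => if i = 1 ∧ j = 0 then 1 else if i = 0 ∧ j = 1 then -1 else 0

/-- `∂/∂w` of a two-variable series. -/
def d01 (f : ℤ → ℤ → R) : ℤ → ℤ → R := fun i j => ((j + 1 : ℤ) : R) * f i (j + 1)

/-- `∂/∂z` of a two-variable series. -/
def d10 (f : ℤ → ℤ → R) : ℤ → ℤ → R := fun i j => ((i + 1 : ℤ) : R) * f (i + 1) j

/-- Substitution `p(f(z,w))` of a two-variable series (zero constant term) into a
one-variable power series `p`. -/
def comp2 (p : ℤ → R) (f : ℤ → ℤ → R) : ℤ → ℤ → R :=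
  fun a b => ∑ᶠ m : ℕ, p (m : ℤ) * pow2 f m a b

/-- Substitution `p(f(z))` of a one-variable series (zero constant term) into a
one-variable power series `p`. -/
def comp1 (p : ℤ → R) (f : ℤ → R) : ℤ → R :=
  fun a => ∑ᶠ m : ℕ, p (m : ℤ) * pow1 f m a

/-- `(G - z)/z` for `G ≡ z (mod w)`. -/
def hzS (G : ℤ → ℤ → R) : ℤ → ℤ → R := fun i j => G (i + 1) j - oneS2 R i j

/-- Integer powers `i_{z,w} G^n`, for `G ≡ z (mod w)`, expanded in `R((z))⟦w⟧`:
the Newton expansion `z^n ∑_k C(n,k) ((G-z)/z)^k`. -/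
def izwPow (G : ℤ → ℤ → R) (n : ℤ) : ℤ → ℤ → R :=
  fun a b => ∑ᶠ k : ℕ, (zbinom n k : R) * pow2 (hzS G) k (a - n) b

/-- `(G - w)/w` for `G ≡ w (mod z)`. -/
def hwS (G : ℤ → ℤ → R) : ℤ → ℤ → R := fun i j => G i (j + 1) - oneS2 R i j

/-- Integer powers `i_{w,z} G^n`, for `G ≡ w (mod z)`, expanded in `R((w))⟦z⟧`. -/
def iwzPow (G : ℤ → ℤ → R) (n : ℤ) : ℤ → ℤ → R :=
  fun a b => ∑ᶠ k : ℕ, (zbinom n k : R) * pow2 (hwS G) k a (b - n)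

/-- `(G + w)/(-w)` for `G ≡ ι(w) (mod z)`. -/
def hwNegS (G : ℤ → ℤ → R) : ℤ → ℤ → R := fun i j => -G i (j + 1) - oneS2 R i j

/-- Integer powers `i_{w,z} G^n`, for `G ≡ -w(1+⋯) (mod z)` (e.g. `G = F(z, ι w)`),
expanded in `R((w))⟦z⟧`. -/
def iwzPowNeg (G : ℤ → ℤ → R) (n : ℤ) : ℤ → ℤ → R :=
  fun a b => (msign n : R) * ∑ᶠ k : ℕ, (zbinom n k : R) * pow2 (hwNegS G) k a (b - n)

/-- `(f + z)/(-z)` for a series `f = -z(1 + ⋯)` such as `ι(z)`. -/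
def hS (f : ℤ → R) : ℤ → R := fun j => -f (j + 1) - oneS R j

/-- Integer powers `f(z)^n` (`n : ℤ`) for `f = -z(1+⋯)`, e.g. `f = ι(z)`. -/
def iotaPow (f : ℤ → R) (n : ℤ) : ℤ → R :=
  fun a => (msign n : R) * ∑ᶠ k : ℕ, (zbinom n k : R) * pow1 (hS f) k (a - n)

/-- `f - 1` for a power series with constant term `1`. -/
def hOneS (f : ℤ → R) : ℤ → R := fun j => f j - oneS R j

/-- Multiplicative inverse of a power series with constant term `1`. -/
def invOne (f : ℤ → R) : ℤ → R :=
  fun a => ∑ᶠ k : ℕ, ((-1 : R) ^ k) * pow1 (hOneS f) k a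

end Series

/-- A (one-dimensional, commutative) formal group law `F(z,w)` over `R`, together with
its (unique) inverse `ι`. -/
structure FormalGroupLaw (R : Type*) [CommRing R] where
  F : ℤ → ℤ → R
  F_supp : ∀ i j : ℤ, i < 0 ∨ j < 0 → F i j = 0
  /-- `F(z,0) = z`, so that `F(z,w) = z + w + O(zw)` using commutativity. -/
  F_modw : ∀ i : ℤ, F i 0 = if i = 1 then 1 else 0
  F_comm : ∀ i j : ℤ, F i j = F j i
  /-- associativity `F(F(z,w),v) = F(z,F(w,v))`, coefficient-wise. -/
  F_assoc : ∀ a b c : ℤ,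
    (∑ᶠ m : ℕ, F (m : ℤ) c * pow2 F m a b) = ∑ᶠ n : ℕ, F a (n : ℤ) * pow2 F n b c
  /-- the inverse `ι(z) = -z + O(z²)`. -/
  inv : ℤ → R
  inv_supp : ∀ n : ℤ, n < 1 → inv n = 0
  inv_one : inv 1 = -1
  /-- `F(z, ι(z)) = 0`, coefficient-wise. -/
  inv_eq : ∀ n : ℤ, (∑ᶠ p : ℤ × ℕ, F p.1 (p.2 : ℤ) * pow1 inv p.2 (n - p.1)) = 0

namespace FormalGroupLaw

variable {R : Type*} [CommRing R] {M : Type*} [AddCommGroup M] [Module R M]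

/-- The series `F(z, ι(w))`. -/
def Fzi (𝓕 : FormalGroupLaw R) : ℤ → ℤ → R :=
  fun i j => ∑ᶠ m : ℕ, 𝓕.F i (m : ℤ) * pow1 𝓕.inv m j

/-- The `F`-delta distribution `z⁻¹δ_F(w/z) = i_{z,w}F(z,ιw)⁻¹ - i_{w,z}F(z,ιw)⁻¹`. -/
def delta (𝓕 : FormalGroupLaw R) : ℤ → ℤ → R :=
  fun a b => izwPow 𝓕.Fzi (-1) a b - iwzPowNeg 𝓕.Fzi (-1) a b

/-- `p_F(z) = F^{0,1}(z,0)⁻¹`, the coefficient series of the invariant 1-form. -/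
def pF (𝓕 : FormalGroupLaw R) : ℤ → R := invOne (fun i => 𝓕.F i 1)

/-- `F`-residue: the coefficient of `z⁻¹` in `f(z)·p_F(z)`. -/
def resF (𝓕 : FormalGroupLaw R) (f : ℤ → M) : M := ∑ᶠ i : ℤ, 𝓕.pF i • f (-1 - i)

/-- The `F`-hyperderivative `𝒮^F_n f`, defined by `i_{z,w}f(F(z,w)) = ∑_n (𝒮^F_n f)(z) wⁿ`. -/
def hyper (𝓕 : FormalGroupLaw R) (n : ℕ) (f : ℤ → R) : ℤ → R :=
  fun a => ∑ᶠ m : ℤ, f m * izwPow 𝓕.F m a (n : ℤ)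

/-- `F`-binomial coefficients: `i_{z,w}F(z,w)^n = ∑_{i,j} binomF(n;i,j) z^i w^j`. -/
def binomF (𝓕 : FormalGroupLaw R) (n i j : ℤ) : R := izwPow 𝓕.F n i j

/-- `φ` is a logarithm of `F`: `φ(F(z,w)) = φ(z) + φ(w)`, `φ(0) = 0`, `φ'(0) = 1`. -/
def IsLogarithm (𝓕 : FormalGroupLaw R) (φ : ℤ → R) : Prop :=
  (∀ n : ℤ, n < 0 → φ n = 0) ∧ φ 0 = 0 ∧ φ 1 = 1 ∧
  ∀ a b : ℤ, (∑ᶠ m : ℕ, φ (m : ℤ) * pow2 𝓕.F m a b)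
    = (if b = 0 then φ a else 0) + (if a = 0 then φ b else 0)

end FormalGroupLaw

section Vertex

variable {R : Type*} [CommRing R] {V : Type*} [AddCommGroup V] [Module R V]

/-- For `c = ∑_m c_m v^m ∈ V((v))`, the substitution `v ↦ F(z,w)` (coefficient `(k,n)` of
`z^k w^n`, expanded in `V((z))⟦w⟧`). -/
def substF (𝓕 : FormalGroupLaw R) (c : ℤ → V) : ℤ → ℤ → V :=
  fun k n => ∑ᶠ m : ℤ, izwPow 𝓕.F m k n • c m

/-- Coefficients of `i_{z,w} Y(a, F(z,w)) (Y(b,w)c)`, where `Ya v = Y(a,·)v` and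
`d = Y(b,·)c`. -/
def substFProd (𝓕 : FormalGroupLaw R) (Ya : V → ℤ → V) (d : ℤ → V) : ℤ → ℤ → V :=
  fun k n => ∑ᶠ q : ℤ × ℤ, izwPow 𝓕.F q.1 k (n - q.2) • Ya (d q.2) q.1

end Vertex

/-- A vertex `F`-algebra `(V, 𝟙, 𝒮, Y)` over the formal group law `𝓕`.
`Y a b : ℤ → V` records the coefficients of `Y(a,z)b = ∑_k (Y a b k) z^k`, and
`S n` is the component `𝒮⁽ⁿ⁾` of the `F`-shift operator `𝒮(z) = ∑_{n≥0} 𝒮⁽ⁿ⁾ zⁿ`. -/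
structure VertexFAlgebra (R : Type*) [CommRing R] (𝓕 : FormalGroupLaw R)
    (V : Type*) [AddCommGroup V] [Module R V] where
  vac : V
  S : ℕ → V →ₗ[R] V
  Y : V →ₗ[R] V →ₗ[R] (ℤ → V)
  /-- `Y(a,z)b ∈ V((z))`. -/
  Y_laurent : ∀ a b : V, IsLaurent (Y a b)
  /-- `Y(a,z)𝟙` is holomorphic. -/
  vac_holo : ∀ (a : V) (k : ℤ), k < 0 → Y a vac k = 0
  /-- `Y(a,z)𝟙|_{z=0} = a`. -/
  creation : ∀ a : V, Y a vac 0 = a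
  /-- `Y(𝟙,z) = id`. -/
  Y_vac : ∀ (b : V) (k : ℤ), Y vac b k = if k = 0 then b else 0
  /-- `𝒮(0) = id`. -/
  S_zero : S 0 = LinearMap.id
  /-- `𝒮(z)𝟙 = 𝟙`. -/
  S_vac : ∀ n : ℕ, 1 ≤ n → S n vac = 0
  /-- `𝒮(z) ∘ 𝒮(w) = 𝒮(F(z,w))`, coefficient-wise. -/
  S_comp : ∀ (a : V) (i j : ℕ),
    S i (S j a) = ∑ᶠ m : ℕ, pow2 𝓕.F m (i : ℤ) (j : ℤ) • S m a
  /-- `F`-translation covariance `Y(𝒮(w)a, z)b = i_{z,w} Y(a,F(z,w))b`. -/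
  translation : ∀ (a b : V) (k : ℤ) (n : ℕ),
    Y (S n a) b k = substF 𝓕 (Y a b) k (n : ℤ)
  /-- weak `F`-associativity. -/
  weak_assoc : ∀ a b c : V, ∃ N : ℕ,
    mulS2 (pow2 𝓕.F N) (fun k l => Y (Y a b k) c l)
      = mulS2 (pow2 𝓕.F N) (substFProd 𝓕 (fun v => Y a v) (Y b c))
  /-- skew symmetry `Y(a,z)b = 𝒮(z)(Y(b,ι(z))a)`, coefficient-wise. -/
  skew : ∀ (a b : V) (k : ℤ),
    Y a b k = ∑ᶠ q : ℕ × ℤ, iotaPow 𝓕.inv q.2 (k - (q.1 : ℤ)) • S q.1 (Y b a q.2)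

end

theorem zbinom_eq_choose (n : ℤ) (k : ℕ) : zbinom n k = Ring.choose n k := by
  unfold zbinom
  split_ifs with h
  · obtain ⟨m, rfl⟩ := Int.eq_ofNat_of_zero_le h
    rw [Int.toNat_natCast]
    exact (Ring.choose_natCast (R := ℤ) m k).symm
  · have h1 : Ring.choose n k = Ring.choose (-(-n)) k := by rw [neg_neg]
    obtain ⟨m, hm⟩ := Int.eq_ofNat_of_zero_le (show 0 ≤ (k : ℤ) - n - 1 by omega)
    rw [h1, Ring.choose_neg, hm, show -n + (k : ℤ) - 1 = (m : ℕ) by omega, Ring.choose_natCast]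
    simp [Int.negOnePow_def, Units.smul_def]

theorem choose_neg_one_sub (j : ℤ) (k : ℕ) :
    Ring.choose (-1 - j) k = (-1) ^ k * Ring.choose (j + k) k := by
  rw [show -1 - j = -(1 + j) by ring, Ring.choose_neg, show 1 + j + (k : ℤ) - 1 = j + k by ring]
  simp [Int.negOnePow_def, Units.smul_def]

namespace PowerSeries

theorem coeff_pow_mul_derivative {S : Type*} [CommRing S] (v : S⟦X⟧) (k : ℕ) :
    coeff k (v ^ k * d⁄dX S v) = coeff (k + 1) (v ^ (k + 1)) := by
  have generic (w : (MvPolynomial ℕ ℤ)⟦X⟧) :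
      coeff k (w ^ k * d⁄dX _ w) = coeff (k + 1) (w ^ (k + 1)) := by
    have h : coeff k (d⁄dX _ (w ^ (k + 1))) = (k + 1 : MvPolynomial ℕ ℤ) *
        coeff k (w ^ k * d⁄dX _ w) := by
      rw [Derivation.leibniz_pow, map_nsmul, nsmul_eq_mul, Nat.add_sub_cancel, smul_eq_mul]
      push_cast
      rfl
    rw [coeff_derivative, mul_comm] at h
    exact (mul_left_cancel₀ (by exact_mod_cast k.succ_ne_zero) h).symm
  let φ : MvPolynomial ℕ ℤ →+* S := MvPolynomial.eval₂Hom (Int.castRingHom S) fun i => coeff i v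
  let w : (MvPolynomial ℕ ℤ)⟦X⟧ := mk fun i => MvPolynomial.X i
  have hw : map φ w = v := by ext i; simp [φ, w]
  have hd : map φ (d⁄dX _ w) = d⁄dX S v := by
    ext i; simp [coeff_derivative, φ, w]
  rw [← hd, ← hw, ← map_pow, ← map_mul, coeff_map, generic, ← map_pow, coeff_map]

end PowerSeries

namespace LaurentSeries

open PowerSeries Finset

variable {R : Type*} [CommRing R]

theorem finite_support_mul_coeff (x y : LaurentSeries R) (a : ℤ) :
    (Function.support fun i : ℤ => x.coeff i * y.coeff (a - i)).Finite := by
  apply ((antidiagonal x.isPWO_support y.isPWO_support a).image Prod.fst).finite_toSet.subset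
  intro i hi
  simp only [coe_image, Set.mem_image, mem_coe, Finset.mem_antidiagonal]
  refine ⟨(i, a - i), ⟨?_, ?_, by simp⟩, rfl⟩
  · exact fun h => hi (by simp [h])
  · exact fun h => hi (by simp [h])

theorem coeff_mul_eq_finsum (x y : LaurentSeries R) (a : ℤ) :
    (x * y).coeff a = ∑ᶠ i : ℤ, x.coeff i * y.coeff (a - i) := by
  rw [HahnSeries.coeff_mul, finsum_eq_sum_of_support_subset (s := (antidiagonal x.isPWO_support
    y.isPWO_support a).image Prod.fst), sum_image]
  · refine sum_congr rfl fun p hp => ?_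
    rw [Finset.mem_antidiagonal] at hp
    rw [← hp.2.2, add_sub_cancel_left]
  · rintro ⟨p, p'⟩ hp ⟨q, q'⟩ hq h
    simp only [mem_coe, Finset.mem_antidiagonal] at hp hq h
    ext
    · exact h
    · dsimp; omega
  · intro i hi
    simp only [coe_image, Set.mem_image, mem_coe, Finset.mem_antidiagonal]
    refine ⟨(i, a - i), ⟨?_, ?_, by simp⟩, rfl⟩
    · exact fun h => hi (by simp [h])
    · exact fun h => hi (by simp [h])

theorem hasseDeriv_mul (n : ℕ) (x y : LaurentSeries R) :
    hasseDeriv R n (x * y) = ∑ p ∈ antidiagonal n, hasseDeriv R p.1 x * hasseDeriv R p.2 y := by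
  ext a
  rw [hasseDeriv_coeff, coeff_mul_eq_finsum, HahnSeries.coeff_sum]
  have h (p : ℕ × ℕ) (hp : p ∈ antidiagonal n) :
      (hasseDeriv R p.1 x * hasseDeriv R p.2 y).coeff a = ∑ᶠ i : ℤ,
        ((Ring.choose i p.1 * Ring.choose (a + n - i) p.2 : ℤ) : R) *
          (x.coeff i * y.coeff (a + n - i)) := by
    rw [coeff_mul_eq_finsum, ← finsum_comp_equiv (Equiv.subRight (p.1 : ℤ))]
    refine finsum_congr fun i => ?_
    have hn : (p.1 : ℤ) + p.2 = n := by exact_mod_cast mem_antidiagonal.mp hp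
    have e : a - (i - p.1) + (p.2 : ℤ) = a + n - i := by omega
    simp only [hasseDeriv_coeff, Equiv.subRight_apply, zsmul_eq_mul, sub_add_cancel, e]
    push_cast
    ring
  rw [sum_congr rfl h, ← finsum_sum_comm]
  · rw [smul_finsum' _ (finite_support_mul_coeff _ _ _)]
    refine finsum_congr fun i => ?_
    rw [← sum_mul, ← Int.cast_sum, ← Ring.add_choose_eq _ (Commute.all _ _), zsmul_eq_mul]
    congr 3
    ring
  · intro p _
    exact (finite_support_mul_coeff x y (a + n)).subset fun i hi h => hi (by simp [h])

theorem coeff_neg_one_pow_mul (k : ℕ) (x : LaurentSeries R) (a : ℤ) :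
    ((-1) ^ k * x).coeff a = (-1) ^ k * x.coeff a := by
  rcases Nat.even_or_odd k with h | h <;> simp [h.neg_one_pow]

theorem coeff_hasseDeriv_mul (k : ℕ) (x y : LaurentSeries R) :
    (hasseDeriv R k x * y).coeff (-1) = (-1) ^ k * (x * hasseDeriv R k y).coeff (-1) := by
  rw [coeff_mul_eq_finsum, coeff_mul_eq_finsum, mul_finsum' _ _ (finite_support_mul_coeff _ _ _),
    ← finsum_comp_equiv (Equiv.subRight (k : ℤ))]
  refine finsum_congr fun i => ?_
  have h := choose_neg_one_sub (-1 - i) k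
  rw [sub_sub_cancel] at h
  have e : -1 - (i - (k : ℤ)) = -1 - i + k := by ring
  simp only [hasseDeriv_coeff, Equiv.subRight_apply, zsmul_eq_mul, sub_add_cancel, e, h]
  push_cast
  ring

/-- The Taylor expansion `f(z) ↦ f(z + t)`. -/
noncomputable def taylor : LaurentSeries R →+* (LaurentSeries R)⟦X⟧ where
  toFun x := mk fun k => hasseDeriv R k x
  map_zero' := by ext; simp
  map_add' x y := by ext; simp
  map_one' := by
    ext k : 1
    rw [coeff_mk, coeff_one, ← HahnSeries.single_zero_one, hasseDeriv_single]
    rcases k with _ | k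
    · simp
    · simp [Ring.choose_zero_succ]
  map_mul' x y := by ext k : 1; simp [coeff_mul, hasseDeriv_mul]

@[simp]
theorem coeff_taylor (k : ℕ) (x : LaurentSeries R) : coeff k (taylor x) = hasseDeriv R k x := by
  simp [taylor]

/-- The Hasse derivative with respect to `z` on `R((z))⟦w⟧`. -/
noncomputable def coeffwiseHasse (k : ℕ) (u : (LaurentSeries R)⟦X⟧) : (LaurentSeries R)⟦X⟧ :=
  mk fun n => hasseDeriv R k (coeff n u)

@[simp]
theorem coeff_coeffwiseHasse (k n : ℕ) (u : (LaurentSeries R)⟦X⟧) :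
    coeff n (coeffwiseHasse k u) = hasseDeriv R k (coeff n u) :=
  coeff_mk _ _

/-- The Taylor expansion `u(z, w) ↦ u(z + t, w)` on `R((z))⟦w⟧`. -/
noncomputable def coeffwiseTaylor : (LaurentSeries R)⟦X⟧ →+* (LaurentSeries R)⟦X⟧⟦X⟧ where
  toFun u := mk fun k => coeffwiseHasse k u
  map_zero' := by ext; simp
  map_add' x y := by ext; simp
  map_one' := by
    ext k n : 2
    have h := congrArg (coeff k) (map_one (taylor (R := R)))
    rw [coeff_taylor, coeff_one] at h
    rw [coeff_mk, coeff_coeffwiseHasse, coeff_one, coeff_one]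
    split_ifs with h1 h2 h2 <;> simp_all [coeff_one]
  map_mul' u v := by
    ext k n : 2
    simp only [coeff_mk, coeff_coeffwiseHasse, coeff_mul, map_sum, hasseDeriv_mul]
    exact sum_comm

theorem coeffwiseHasse_pow_mul (k : ℕ) (u : (LaurentSeries R)⟦X⟧) :
    coeffwiseHasse k (u ^ k * coeffwiseHasse 1 u) = coeffwiseHasse (k + 1) (u ^ (k + 1)) := by
  have hd : coeffwiseTaylor (coeffwiseHasse 1 u) =
      d⁄dX (LaurentSeries R)⟦X⟧ (coeffwiseTaylor u) := by
    ext j n : 2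
    rw [coeff_derivative]
    simp only [coeffwiseTaylor, RingHom.coe_mk, MonoidHom.coe_mk, OneHom.coe_mk, coeff_mk,
      coeff_coeffwiseHasse, hasseDeriv_comp]
    rw [mul_comm, ← Nat.cast_succ, ← nsmul_eq_mul, map_nsmul, coeff_coeffwiseHasse]
    simp
  have h := coeff_pow_mul_derivative (coeffwiseTaylor u) k
  rw [← hd, ← map_pow, ← map_mul, ← map_pow] at h
  simpa [coeffwiseTaylor] using h

/-- The substitution `f(z) ↦ f(z + u)` for `u ∈ R((z))⟦w⟧`, intended for `u` divisible by `w`. -/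
noncomputable def translate (u : (LaurentSeries R)⟦X⟧) (x : LaurentSeries R) :
    (LaurentSeries R)⟦X⟧ :=
  mk fun n => ∑ k ∈ range (n + 1), hasseDeriv R k x * coeff n (u ^ k)

variable {u : (LaurentSeries R)⟦X⟧}

theorem coeff_translate (n : ℕ) (x : LaurentSeries R) :
    coeff n (translate u x) = ∑ k ∈ range (n + 1), hasseDeriv R k x * coeff n (u ^ k) :=
  coeff_mk _ _

theorem coeff_pow_eq_zero (hu : constantCoeff u = 0) {n k : ℕ} (h : n < k) :
    coeff n (u ^ k) = 0 :=
  coeff_of_lt_order _ ((Nat.cast_lt.mpr h).trans_le (le_order_pow_of_constantCoeff_eq_zero k hu))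

theorem translate_eq_subst (hu : constantCoeff u = 0) (x : LaurentSeries R) :
    translate u x = (taylor x).subst u := by
  ext n : 1
  rw [coeff_translate, coeff_subst' (HasSubst.of_constantCoeff_zero' hu),
    finsum_eq_sum_of_support_subset (s := range (n + 1))]
  · simp
  · intro k hk
    by_contra h
    simp only [coe_range, Set.mem_Iio, not_lt] at h
    exact hk (by simp [coeff_pow_eq_zero hu (show n < k by omega)])

theorem translate_mul (hu : constantCoeff u = 0) (x y : LaurentSeries R) :
    translate u (x * y) = translate u x * translate u y := by
  simp only [translate_eq_subst hu, map_mul, subst_mul (HasSubst.of_constantCoeff_zero' hu)]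

theorem translate_one (hu : constantCoeff u = 0) : translate u (1 : LaurentSeries R) = 1 := by
  rw [translate_eq_subst hu, map_one, ← coe_substAlgHom (HasSubst.of_constantCoeff_zero' hu),
    map_one]

theorem coeff_zero_translate (x : LaurentSeries R) : coeff 0 (translate u x) = x := by
  simp [coeff_translate]

theorem coeff_translate_mul (hu : constantCoeff u = 0) (n : ℕ) (x : LaurentSeries R)
    (v : (LaurentSeries R)⟦X⟧) :
    coeff n (translate u x * v) =
      ∑ k ∈ range (n + 1), hasseDeriv R k x * coeff n (u ^ k * v) := by
  simp only [coeff_mul, mul_sum]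
  rw [sum_comm]
  refine sum_congr rfl fun p hp => ?_
  rw [coeff_translate, sum_mul]
  have hle : p.1 ≤ n := HasAntidiagonal.antidiagonal.fst_le hp
  rw [sum_subset (range_mono (Nat.succ_le_succ hle))]
  · exact sum_congr rfl fun _ _ => mul_assoc _ _ _
  · intro k _ hk
    rw [coeff_pow_eq_zero hu (by simpa using hk)]
    simp

/-- Invariance of the residue under the change of variables `z ↦ z + u`. -/
theorem residue_translate (hu : constantCoeff u = 0) {n : ℕ} (hn : 1 ≤ n)
    (x : LaurentSeries R) :
    (coeff n (translate u x * (1 + coeffwiseHasse 1 u))).coeff (-1) = 0 := by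
  have key : ∑ k ∈ range (n + 1), (-1) ^ k *
      hasseDeriv R k (coeff n (u ^ k * (1 + coeffwiseHasse 1 u))) = 0 := by
    have step (k : ℕ) : (-1) ^ k *
        hasseDeriv R k (coeff n (u ^ k * (1 + coeffwiseHasse 1 u))) =
        (-1) ^ k * hasseDeriv R k (coeff n (u ^ k)) -
          (-1) ^ (k + 1) * hasseDeriv R (k + 1) (coeff n (u ^ (k + 1))) := by
      have h := congrArg (coeff n) (coeffwiseHasse_pow_mul k u)
      rw [coeff_coeffwiseHasse, coeff_coeffwiseHasse] at h
      rw [mul_add, mul_one, map_add, map_add, h]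
      ring
    rw [sum_congr rfl fun k _ => step k,
      sum_range_sub' fun k => (-1) ^ k * hasseDeriv R k (coeff n (u ^ k)),
      coeff_pow_eq_zero hu n.lt_succ_self]
    simp [coeff_one, show n ≠ 0 by omega]
  rw [coeff_translate_mul hu, HahnSeries.coeff_sum]
  simp only [coeff_hasseDeriv_mul, ← coeff_neg_one_pow_mul, mul_left_comm _ x]
  rw [← HahnSeries.coeff_sum, ← mul_sum, key]
  simp

end LaurentSeries

section CoefficientFunctions

open LaurentSeries PowerSeries Finset

variable {R : Type*} [CommRing R]

theorem oneS_eq_coeff : oneS R = (1 : LaurentSeries R).coeff := by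
  ext a
  simp [oneS, HahnSeries.coeff_one]

theorem mulS_coeff (x y : LaurentSeries R) : mulS x.coeff y.coeff = (x * y).coeff := by
  ext a
  simp [mulS, coeff_mul_eq_finsum]

theorem pow1_coeff (x : LaurentSeries R) (k : ℕ) : pow1 x.coeff k = (x ^ k).coeff := by
  induction k with
  | zero => simp [pow1, oneS_eq_coeff]
  | succ k ih => rw [pow1, ih, mulS_coeff, pow_succ']

theorem IsLaurent.exists_coeff_eq {f : ℤ → R} (hf : IsLaurent f) :
    ∃ x : LaurentSeries R, x.coeff = f := by
  obtain ⟨N, hN⟩ := hf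
  exact ⟨HahnSeries.ofSuppBddBelow f ⟨N, fun i hi => not_lt.mp fun h => hi (hN i h)⟩, rfl⟩

theorem coeff_pow_eq_zero_of_lt {x : LaurentSeries R} (hx : ∀ a < 1, x.coeff a = 0) (k : ℕ) :
    ∀ a < (k : ℤ), (x ^ k).coeff a = 0 := by
  induction k with
  | zero =>
    intro a ha
    simp only [Nat.cast_zero] at ha
    simp [HahnSeries.coeff_one, ha.ne]
  | succ k ih =>
    intro a ha
    rw [pow_succ', coeff_mul_eq_finsum]
    refine finsum_eq_zero_of_forall_eq_zero fun i => ?_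
    push_cast at ha
    rcases lt_or_ge i 1 with hi | hi
    · rw [hx i hi, zero_mul]
    · rw [ih (a - i) (by omega), mul_zero]

open scoped Classical in
theorem finsum_int_eq_finsum_nat {f : ℤ → R} (hf : ∀ m < 0, f m = 0) :
    ∑ᶠ m : ℤ, f m = ∑ᶠ m : ℕ, f m := by
  rw [← finsum_mem_range (g := ((↑) : ℕ → ℤ)) Nat.cast_injective]
  refine finsum_congr fun m => ?_
  by_cases hm : m ∈ Set.range ((↑) : ℕ → ℤ)
  · rw [finsum_eq_if, if_pos hm]
  · rw [finsum_eq_if, if_neg hm]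
    exact hf m (not_le.mp fun h => hm ⟨m.toNat, Int.toNat_of_nonneg h⟩)

theorem exists_invOne_eq_coeff {q : LaurentSeries R} (h0 : ∀ a < 0, q.coeff a = 0)
    (h1 : q.coeff 0 = 1) : ∃ p : LaurentSeries R, p.coeff = invOne q.coeff ∧ p * q = 1 := by
  have hone : hOneS q.coeff = (q - 1).coeff := by
    ext a
    simp [hOneS, oneS_eq_coeff]
  have hq : ∀ a < 1, (q - 1).coeff a = 0 := by
    intro a ha
    rcases (show a < 0 ∨ a = 0 by omega) with h | rfl
    · simp [h0 a h, HahnSeries.coeff_one, h.ne]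
    · simp [h1, HahnSeries.coeff_one]
  have hinv (a : ℤ) (K : ℕ) (hK : a < K) :
      invOne q.coeff a = (∑ k ∈ range K, (1 - q) ^ k).coeff a := by
    rw [invOne, hone, HahnSeries.coeff_sum, finsum_eq_sum_of_support_subset (s := range K)]
    · refine sum_congr rfl fun k _ => ?_
      rw [pow1_coeff, ← coeff_neg_one_pow_mul, ← mul_pow]
      congr 3
      ring
    · intro k hk
      by_contra h
      simp only [coe_range, Set.mem_Iio, not_lt] at h
      exact hk (by simp only [pow1_coeff, coeff_pow_eq_zero_of_lt hq k a (by omega), mul_zero])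
  have hL : IsLaurent (invOne q.coeff) := ⟨0, fun a ha => by simpa using hinv a 0 (by simpa)⟩
  obtain ⟨p, hp⟩ := hL.exists_coeff_eq
  refine ⟨p, hp, ?_⟩
  ext a
  have hK : a < ((a + 1).toNat : ℤ) := by omega
  have hcoeff : (p * q).coeff a = ((∑ k ∈ range (a + 1).toNat, (1 - q) ^ k) * q).coeff a := by
    rw [coeff_mul_eq_finsum, coeff_mul_eq_finsum]
    refine finsum_congr fun i => ?_
    rcases le_or_gt i a with hi | hi
    · rw [hp, hinv i _ (hi.trans_lt hK)]
    · rw [h0 (a - i) (by omega), mul_zero, mul_zero]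
  have hg := geom_sum_mul_neg (1 - q) (a + 1).toNat
  rw [sub_sub_cancel] at hg
  have hneg : ∀ b < 1, (1 - q).coeff b = 0 := by
    intro b hb
    rw [← neg_sub q 1, HahnSeries.coeff_neg, hq b hb, neg_zero]
  rw [hcoeff, hg, HahnSeries.coeff_sub, coeff_pow_eq_zero_of_lt hneg _ a hK, sub_zero]

/-- `x ∈ R((z))⟦w⟧` has coefficient function `f`, which vanishes at exponents of `z` below `N`. -/
structure HasCoeffs (x : (LaurentSeries R)⟦X⟧) (N : ℤ) (f : ℤ → ℤ → R) : Prop where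
  eq_zero_of_neg : ∀ a b, b < 0 → f a b = 0
  eq_zero_of_lt : ∀ a b, a < N → f a b = 0
  coeff_eq : ∀ a (n : ℕ), (coeff n x).coeff a = f a n

theorem exists_hasCoeffs {N : ℤ} {f : ℤ → ℤ → R} (hneg : ∀ a b, b < 0 → f a b = 0)
    (hlt : ∀ a b, a < N → f a b = 0) : ∃ x, HasCoeffs x N f := by
  have h (n : ℕ) : IsLaurent fun a => f a n := ⟨N, fun a ha => hlt a n ha⟩
  choose y hy using fun n => (h n).exists_coeff_eq
  exact ⟨PowerSeries.mk y, hneg, hlt, fun a n => by rw [coeff_mk, hy]⟩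

theorem hasCoeffs_one : HasCoeffs (1 : (LaurentSeries R)⟦X⟧) 0 (oneS2 R) where
  eq_zero_of_neg a b hb := by simp [oneS2, hb.ne]
  eq_zero_of_lt a b ha := by simp [oneS2, ha.ne]
  coeff_eq a n := by
    rw [coeff_one, oneS2]
    split_ifs <;> simp_all [HahnSeries.coeff_one]

theorem HasCoeffs.mul {x y : (LaurentSeries R)⟦X⟧} {N M : ℤ} {f g : ℤ → ℤ → R}
    (hf : HasCoeffs x N f) (hg : HasCoeffs y M g) : HasCoeffs (x * y) (N + M) (mulS2 f g) where
  eq_zero_of_neg a b hb := by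
    refine finsum_eq_zero_of_forall_eq_zero fun p => ?_
    rcases lt_or_ge p.2 0 with h | h
    · rw [hf.eq_zero_of_neg _ _ h, zero_smul]
    · rw [hg.eq_zero_of_neg _ _ (by omega), smul_zero]
  eq_zero_of_lt a b ha := by
    refine finsum_eq_zero_of_forall_eq_zero fun p => ?_
    rcases lt_or_ge p.1 N with h | h
    · rw [hf.eq_zero_of_lt _ _ h, zero_smul]
    · rw [hg.eq_zero_of_lt _ _ (by omega), smul_zero]
  coeff_eq a n := by
    rw [mulS2, finsum_eq_sum_of_support_subset
      (s := Icc N (a - M) ×ˢ (antidiagonal n).image fun p => (p.1 : ℤ)), sum_product_right,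
      sum_image, coeff_mul, HahnSeries.coeff_sum]
    · refine sum_congr rfl fun p hp => ?_
      have hn : (n : ℤ) - p.1 = p.2 := by
        have := mem_antidiagonal.mp hp
        omega
      rw [coeff_mul_eq_finsum, finsum_eq_sum_of_support_subset (s := Icc N (a - M))]
      · exact sum_congr rfl fun i _ => by rw [hf.coeff_eq, hg.coeff_eq, hn, smul_eq_mul]
      · intro i hi
        simp only [coe_Icc, Set.mem_Icc]
        by_contra h
        rcases not_and_or.mp h with h | h
        · exact hi (by simp only [hf.coeff_eq, hf.eq_zero_of_lt i _ (not_le.mp h), zero_mul])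
        · exact hi (by simp only [hg.coeff_eq, hg.eq_zero_of_lt (a - i) _ (by omega), mul_zero])
    · intro p hp p' hp' h
      have h1 := mem_antidiagonal.mp hp
      have h2 := mem_antidiagonal.mp hp'
      have h3 : (p.1 : ℤ) = p'.1 := h
      ext <;> omega
    · intro p hp
      simp only [coe_product, Set.mem_prod, coe_Icc, Set.mem_Icc, coe_image, Set.mem_image, mem_coe]
      by_contra h
      apply hp
      rcases lt_or_ge p.1 N with h1 | h1
      · simp only [hf.eq_zero_of_lt _ _ h1, zero_smul]
      rcases lt_or_ge (a - M) p.1 with h2 | h2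
      · simp only [hg.eq_zero_of_lt (a - p.1) _ (by omega), smul_zero]
      rcases lt_or_ge p.2 0 with h3 | h3
      · simp only [hf.eq_zero_of_neg _ _ h3, zero_smul]
      rcases lt_or_ge (n : ℤ) p.2 with h4 | h4
      · simp only [hg.eq_zero_of_neg _ ((n : ℤ) - p.2) (by omega), smul_zero]
      exact absurd ⟨⟨h1, h2⟩, (p.2.toNat, n - p.2.toNat), mem_antidiagonal.mpr (by omega),
        by simp only; omega⟩ h

theorem HasCoeffs.pow {x : (LaurentSeries R)⟦X⟧} {N : ℤ} {f : ℤ → ℤ → R} (hf : HasCoeffs x N f)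
    (k : ℕ) : HasCoeffs (x ^ k) (k * N) (pow2 f k) := by
  induction k with
  | zero => simpa [pow2] using hasCoeffs_one
  | succ k ih =>
    have h := hf.mul ih
    rw [← pow_succ', show N + k * N = ((k + 1 : ℕ) : ℤ) * N by push_cast; ring] at h
    exact h

theorem pow2_swap {f : ℤ → ℤ → R} (hf : ∀ i j, f i j = f j i) (k : ℕ) (a b : ℤ) :
    pow2 f k a b = pow2 f k b a := by
  induction k generalizing a b with
  | zero => simp [pow2, oneS2, and_comm]
  | succ k ih =>
    simp only [pow2, mulS2]
    rw [← finsum_comp_equiv (Equiv.prodComm ℤ ℤ)]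
    exact finsum_congr fun p => by simp [hf p.2 p.1, ih (a - p.2)]

end CoefficientFunctions

namespace FormalGroupLaw

open LaurentSeries PowerSeries Finset

variable {R : Type*} [CommRing R] (𝓕 : FormalGroupLaw R)

theorem exists_hasCoeffs_F : ∃ x, HasCoeffs x 0 𝓕.F :=
  exists_hasCoeffs (fun a b h => 𝓕.F_supp a b (Or.inr h)) fun a b h => 𝓕.F_supp a b (Or.inl h)

/-- The formal group law as an element of `R((z))⟦w⟧`. -/
noncomputable def series : (LaurentSeries R)⟦X⟧ :=
  𝓕.exists_hasCoeffs_F.choose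

theorem hasCoeffs_series : HasCoeffs 𝓕.series 0 𝓕.F :=
  𝓕.exists_hasCoeffs_F.choose_spec

/-- The difference `F(z, w) - z`. -/
noncomputable def displacement : (LaurentSeries R)⟦X⟧ :=
  𝓕.series - C (HahnSeries.single 1 1)

theorem coeff_zero_series : coeff 0 𝓕.series = HahnSeries.single 1 1 := by
  ext a
  rw [𝓕.hasCoeffs_series.coeff_eq, Nat.cast_zero, 𝓕.F_modw, HahnSeries.coeff_single]
  simp

theorem constantCoeff_displacement : constantCoeff 𝓕.displacement = 0 := by
  rw [← coeff_zero_eq_constantCoeff_apply, displacement, map_sub, coeff_zero_series,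
    coeff_zero_C, sub_self]

theorem coeff_displacement {n : ℕ} (hn : n ≠ 0) :
    coeff n 𝓕.displacement = coeff n 𝓕.series := by
  rw [displacement, map_sub, coeff_C, if_neg hn, sub_zero]

theorem hasCoeffs_hzS :
    HasCoeffs (C (HahnSeries.single (-1) 1) * 𝓕.displacement) (-1) (hzS 𝓕.F) where
  eq_zero_of_neg a b hb := by simp [hzS, oneS2, 𝓕.F_supp (a + 1) b (Or.inr hb), hb.ne]
  eq_zero_of_lt a b ha := by
    have h : a ≠ 0 := by omega
    simp [hzS, oneS2, 𝓕.F_supp (a + 1) b (Or.inl (by omega)), h]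
  coeff_eq a n := by
    rw [coeff_C_mul, HahnSeries.coeff_single_mul, one_mul, sub_neg_eq_add, displacement, map_sub,
      HahnSeries.coeff_sub, 𝓕.hasCoeffs_series.coeff_eq, hzS, oneS2, coeff_C]
    congr 1
    split_ifs <;> simp_all

theorem pow2_hzS (k n : ℕ) (a : ℤ) :
    pow2 (hzS 𝓕.F) k a n = (coeff n (𝓕.displacement ^ k)).coeff (a + k) := by
  rw [← (𝓕.hasCoeffs_hzS.pow k).coeff_eq, mul_pow, ← map_pow, coeff_C_mul, HahnSeries.single_pow,
    one_pow, HahnSeries.coeff_single_mul, one_mul]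
  congr 1
  simp

theorem izwPow_eq_sum (m a : ℤ) (n : ℕ) :
    izwPow 𝓕.F m a n = ∑ k ∈ range (n + 1),
      ((Ring.choose m k : ℤ) : R) * (coeff n (𝓕.displacement ^ k)).coeff (a - m + k) := by
  rw [izwPow, finsum_eq_sum_of_support_subset (s := range (n + 1))]
  · exact sum_congr rfl fun k _ => by rw [zbinom_eq_choose, pow2_hzS]
  · intro k hk
    by_contra h
    simp only [coe_range, Set.mem_Iio, not_lt] at h
    refine hk ?_
    simp only [pow2_hzS, LaurentSeries.coeff_pow_eq_zero 𝓕.constantCoeff_displacement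
      (show n < k by omega), HahnSeries.coeff_zero, mul_zero]

/-- The hyperderivatives are the coefficients of `f(F(z, w))`. -/
theorem hyper_coeff (n : ℕ) (x : LaurentSeries R) :
    𝓕.hyper n x.coeff = (coeff n (translate 𝓕.displacement x)).coeff := by
  ext a
  have h (k : ℕ) (m : ℤ) : (hasseDeriv R k x).coeff (m - k) *
      (coeff n (𝓕.displacement ^ k)).coeff (a - (m - k)) = x.coeff m *
      (((Ring.choose m k : ℤ) : R) * (coeff n (𝓕.displacement ^ k)).coeff (a - m + k)) := by
    rw [hasseDeriv_coeff, sub_add_cancel, zsmul_eq_mul, ← sub_add]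
    ring
  rw [coeff_translate, HahnSeries.coeff_sum, hyper]
  simp only [izwPow_eq_sum, mul_sum]
  rw [finsum_sum_comm]
  · refine sum_congr rfl fun k _ => ?_
    rw [coeff_mul_eq_finsum]
    conv_rhs => rw [← finsum_comp_equiv (Equiv.subRight (k : ℤ))]
    exact finsum_congr fun m => (h k m).symm
  · intro k _
    have hfin := finite_support_mul_coeff (hasseDeriv R k x) (coeff n (𝓕.displacement ^ k)) a
    refine (hfin.preimage (Equiv.subRight (k : ℤ)).injective.injOn).subset fun m hm => ?_
    simp only [Set.mem_preimage, Function.mem_support, Equiv.subRight_apply] at hm ⊢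
    rwa [h]

theorem izwPow_eq_coeff (m a : ℤ) (n : ℕ) : izwPow 𝓕.F m a n =
    (coeff n (translate 𝓕.displacement (HahnSeries.single m 1))).coeff a := by
  rw [← hyper_coeff, hyper, finsum_eq_single _ m]
  · simp
  · intro i hi
    simp [HahnSeries.coeff_single_of_ne hi]

theorem translate_single_one :
    translate 𝓕.displacement (HahnSeries.single 1 1) = 𝓕.series := by
  ext n : 1
  rcases n with _ | n
  · rw [coeff_zero_translate, coeff_zero_series]
  · rw [coeff_translate, sum_range_succ', sum_range_succ', sum_eq_zero]
    · simp [coeff_displacement, coeff_one, -HahnSeries.single_zero_one]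
    · intro k _
      have h : Ring.choose (1 : ℤ) (k + 1 + 1) = 0 := by
        have := Ring.choose_natCast (R := ℤ) 1 (k + 1 + 1)
        simpa [Nat.choose_eq_zero_of_lt] using this
      rw [hasseDeriv_single, h]
      simp

theorem translate_single_natCast (m : ℕ) :
    translate 𝓕.displacement (HahnSeries.single (m : ℤ) 1) = 𝓕.series ^ m := by
  have h (y : LaurentSeries R) : translate 𝓕.displacement (y ^ m) =
      translate 𝓕.displacement y ^ m := by
    induction m with
    | zero => rw [pow_zero, pow_zero, translate_one 𝓕.constantCoeff_displacement]
    | succ m ih => rw [pow_succ, translate_mul 𝓕.constantCoeff_displacement, ih, pow_succ]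
  rw [← translate_single_one, ← h, HahnSeries.single_pow]
  simp

theorem izwPow_natCast (m n : ℕ) (a : ℤ) : izwPow 𝓕.F m a n = pow2 𝓕.F m a n := by
  rw [izwPow_eq_coeff, translate_single_natCast, (𝓕.hasCoeffs_series.pow m).coeff_eq]

theorem pow2_one_left (m : ℕ) (b : ℤ) :
    pow2 𝓕.F m 1 b = m * 𝓕.F (b - (m - 1)) 1 := by
  have h := 𝓕.izwPow_natCast m 1 b
  rw [izwPow_eq_coeff, coeff_translate, sum_range_succ, sum_range_one, pow_zero, pow_one,
    coeff_displacement _ one_ne_zero, coeff_one, if_neg one_ne_zero, mul_zero, zero_add,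
    hasseDeriv_single, HahnSeries.coeff_single_mul, 𝓕.hasCoeffs_series.coeff_eq] at h
  rw [pow2_swap 𝓕.F_comm]
  simpa using h.symm

/-- Invariance of the differential `p_F(z) dz`, in terms of `p_F⁻¹`. -/
theorem translate_coeff_one_series :
    translate 𝓕.displacement (coeff 1 𝓕.series) =
      (1 + coeffwiseHasse 1 𝓕.displacement) * C (coeff 1 𝓕.series) := by
  have hd : 1 + coeffwiseHasse 1 𝓕.displacement = coeffwiseHasse 1 𝓕.series := by
    ext n : 1
    rw [map_add, coeff_coeffwiseHasse, coeff_coeffwiseHasse, displacement, map_sub, map_sub,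
      coeff_one, coeff_C]
    split_ifs <;> simp
  rw [hd]
  ext c b
  rw [← hyper_coeff, coeff_mul_C, coeff_coeffwiseHasse, coeff_mul_eq_finsum,
    ← finsum_comp_equiv (Equiv.subRight (1 : ℤ)), hyper, finsum_int_eq_finsum_nat,
    finsum_int_eq_finsum_nat]
  · have h := 𝓕.F_assoc 1 b c
    simp only [pow2_one_left] at h
    simp only [izwPow_natCast, 𝓕.hasCoeffs_series.coeff_eq, Nat.cast_one, 𝓕.F_comm _ 1,
      hasseDeriv_coeff, Equiv.subRight_apply, sub_add_cancel, Ring.choose_one_right]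
    rw [← h]
    refine finsum_congr fun m => ?_
    rw [𝓕.F_comm 1]
    simp only [zsmul_eq_mul, Int.cast_natCast]
    ring
  · intro m hm
    simp [hasseDeriv_coeff, 𝓕.hasCoeffs_series.coeff_eq, 𝓕.F_supp m c (Or.inl hm)]
  · intro m hm
    simp [𝓕.hasCoeffs_series.coeff_eq, 𝓕.F_supp m 1 (Or.inl hm)]

theorem exists_coeff_eq_pF :
    ∃ p : LaurentSeries R, p.coeff = 𝓕.pF ∧ p * coeff 1 𝓕.series = 1 := by
  have hq : (coeff 1 𝓕.series).coeff = fun i => 𝓕.F i 1 := by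
    ext i
    simp [𝓕.hasCoeffs_series.coeff_eq]
  rw [pF, ← hq]
  apply exists_invOne_eq_coeff
  · intro a ha
    rw [hq]
    exact 𝓕.F_supp a 1 (Or.inl ha)
  · rw [hq]
    simp [𝓕.F_comm 0, 𝓕.F_modw]

theorem resF_coeff {p : LaurentSeries R} (hp : p.coeff = 𝓕.pF) (x : LaurentSeries R) :
    𝓕.resF x.coeff = (p * x).coeff (-1) := by
  rw [coeff_mul_eq_finsum, resF, hp]
  rfl

theorem resF_hyper_coeff {n : ℕ} (hn : 1 ≤ n) (x : LaurentSeries R) :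
    𝓕.resF (𝓕.hyper n x.coeff) = 0 := by
  obtain ⟨p, hp, hpq⟩ := 𝓕.exists_coeff_eq_pF
  have hu := 𝓕.constantCoeff_displacement
  have hx : x = x * p * coeff 1 𝓕.series := by rw [mul_assoc, hpq, mul_one]
  rw [hyper_coeff, 𝓕.resF_coeff hp, hx, translate_mul hu, translate_coeff_one_series, ← mul_assoc,
    coeff_mul_C, mul_left_comm, hpq, mul_one]
  exact residue_translate hu hn _

end FormalGroupLaw

/-- for `f, g ∈ R((z))` and `n ≥ 1`:
(i) `Res^F (𝒮^F_n f) dz = 0`;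
(ii) `Res^F (𝒮^F_n f)·g dz = -∑_{j=1}^n Res^F (𝒮^F_{n-j} f)·(𝒮^F_j g) dz`. -/
theorem hyper_residue (R : Type*) [CommRing R] (𝓕 : FormalGroupLaw R)
    (f g : ℤ → R) (hf : IsLaurent f) (hg : IsLaurent g) (n : ℕ) (hn : 1 ≤ n) :
    𝓕.resF (𝓕.hyper n f) = 0 ∧
    𝓕.resF (mulS (𝓕.hyper n f) g)
      = - ∑ j ∈ Finset.Icc 1 n, 𝓕.resF (mulS (𝓕.hyper (n - j) f) (𝓕.hyper j g)) := by
  obtain ⟨x, rfl⟩ := hf.exists_coeff_eq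
  obtain ⟨y, rfl⟩ := hg.exists_coeff_eq
  refine ⟨𝓕.resF_hyper_coeff hn x, ?_⟩
  obtain ⟨p, hp, -⟩ := 𝓕.exists_coeff_eq_pF
  have h := 𝓕.resF_hyper_coeff hn (x * y)
  simp only [𝓕.hyper_coeff, mulS_coeff, 𝓕.resF_coeff hp,
    LaurentSeries.translate_mul 𝓕.constantCoeff_displacement] at h ⊢
  rw [PowerSeries.coeff_mul, ← Finset.Nat.sum_antidiagonal_swap,
    Finset.Nat.sum_antidiagonal_eq_sum_range_succ_mk, Finset.mul_sum, HahnSeries.coeff_sum,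
    Finset.range_eq_Ico, Finset.sum_eq_sum_Ico_succ_bot n.succ_pos] at h
  rw [eq_neg_iff_add_eq_zero]
  simpa [LaurentSeries.coeff_zero_translate, ← Finset.Ico_add_one_right_eq_Icc] using h
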